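/- In the setting of the Denjoy construction—R an irrational rotation of T¹, ν = Σₙ aₙ δ_{xₙ} + b·Leb with xₙ = Rⁿ(x₀), aₙ > 0, Σaₙ < 1, b = 1 − Σaₙ > 0, h the quantile map of ν, Iₙ = h^{-1}{xₙ} = [cₙ,dₙ], A = T¹ \ ⋃ₙ [cₙ,dₙ), and f̃ = (h|_A)^{-1} ∘ R ∘ (h|_A)—the map f̃ extends to an orientation-preserving homeomorphism f of T¹ such that f(Iₙ) = I_{n+1} for all n ∈ ℤ, the open intervals int Iₙ are wandering for f, and h ∘ f = R ∘ h on all of T¹ (so f is semiconjugate to R). In particular f is a circle homeomorphism of Denjoy type. -/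

import Mathlib

/-!
Lifted to the real line, the quantile map `h` becomes a monotone map `H` of degree one whose fibre
over `y` is the compact interval bounded by the left limit and the value at `y` of the distribution
function; this interval degenerates exactly when `y` is not an atom.  Since the rotation `R`
permutes the atoms, it matches nondegenerate fibres with nondegenerate fibres, so mapping the fibre
over `y` affinely onto the fibre over `R y` gives a monotone bijection `F`, whose inverse is the
same construction for `R⁻¹`.  By construction `H ∘ F = R ∘ H`, so `F` has the translation number
of `R`, and the homeomorphism `f` induced by `F` on the circle permutes the fibres of `h` as `R`
permutes points; the orbit of an atom being injective, the blown-up intervals are wandering.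
-/

open Set Function MeasureTheory

noncomputable section

/-- The circle `T¹ = ℝ/ℤ`. -/
abbrev T1 := AddCircle (1 : ℝ)

/-- The `n`-th iterate (`n ∈ ℤ`) of a bijection. -/
def zIter {X : Type*} (g : Equiv.Perm X) (n : ℤ) : X → X := fun x => (g ^ n) x

/-- A set of integers is syndetic if it has bounded gaps. -/
def ZSyndetic (S : Set ℤ) : Prop := ∃ N : ℕ, ∀ n : ℤ, ∃ k ∈ S, |k - n| ≤ (N : ℤ)

/-- A homeomorphism `α` of a metric space is almost periodic if for every `ε > 0` the set
`{n ∈ ℤ | dist(αⁿ, Id) < ε}` is syndetic. -/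
def AlmostPeriodicHomeo {Θ : Type*} [MetricSpace Θ] (α : Θ ≃ₜ Θ) : Prop :=
  ∀ ε > (0 : ℝ), ZSyndetic {n : ℤ | ∀ θ : Θ, dist (zIter α.toEquiv n θ) θ < ε}

/-- A homeomorphism is minimal if every (two-sided) orbit is dense. -/
def MinimalHomeo {Θ : Type*} [TopologicalSpace Θ] (α : Θ ≃ₜ Θ) : Prop :=
  ∀ θ : Θ, Dense (range fun n : ℤ => zIter α.toEquiv n θ)

/-- A self-map `g` of a metric space is almost periodic if its family of iterates
is (uniformly) equicontinuous. -/
def AlmostPeriodicMap {Y : Type*} [MetricSpace Y] (g : Y → Y) : Prop :=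
  ∀ ε > (0 : ℝ), ∃ δ > (0 : ℝ), ∀ y y' : Y, dist y y' < δ → ∀ n : ℕ, dist (g^[n] y) (g^[n] y') < ε

/-- `h` is a factor map (semiconjugacy) from `(X, f)` onto `(Y, g)`:
a continuous surjection with `h ∘ f = g ∘ h`.  Then `(X, f)` is a topological
extension of `(Y, g)`. -/
def IsFactorMap {X Y : Type*} [TopologicalSpace X] [TopologicalSpace Y]
    (f : X → X) (g : Y → Y) (h : X → Y) : Prop :=
  Continuous h ∧ Surjective h ∧ h ∘ f = g ∘ h

/-- A map `h` is almost 1-1 if the set of points of the target having exactly one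
preimage is dense. -/
def AlmostOneOne {X Y : Type*} [TopologicalSpace Y] (h : X → Y) : Prop :=
  Dense {y : Y | ∃! x, h x = y}

/-- A witness that the system `(X, f)` is almost automorphic: an almost periodic
homeomorphism of a compact metric space which is an almost 1-1 factor of `(X, f)`. -/
structure AAWitness {X : Type*} [TopologicalSpace X] (f : X → X) where
  (Y : Type)
  [mY : MetricSpace Y]
  [cY : CompactSpace Y]
  (g : Y ≃ₜ Y)
  (hmap : X → Y)
  (factor : IsFactorMap f (⇑g) hmap)
  (a11 : AlmostOneOne hmap)
  (ap : ∀ ε > (0 : ℝ), ∃ δ > (0 : ℝ), ∀ y y' : Y, dist y y' < δ →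
        ∀ n : ℤ, dist (zIter g.toEquiv n y) (zIter g.toEquiv n y') < ε)

/-- `M` is a minimal set of `f`: nonempty, closed, invariant, and without proper
nonempty closed invariant subsets. -/
def IsMinimalSet {X : Type*} [TopologicalSpace X] (f : X → X) (M : Set X) : Prop :=
  M.Nonempty ∧ IsClosed M ∧ f '' M = M ∧
    ∀ M' ⊆ M, M'.Nonempty → IsClosed M' → f '' M' ⊆ M' → M' = M

/-- The restriction of `f` to an invariant set. -/
def restrictMap {X : Type*} {f : X → X} {M : Set X} (hM : Set.MapsTo f M M) : ↥M → ↥M :=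
  Set.MapsTo.restrict f M M hM

/-- `M` is an almost automorphic minimal set of `f`: `f` restricted to `M` admits an
almost periodic almost 1-1 factor. -/
def IsAAMinimal {X : Type*} [MetricSpace X] (f : X → X) (M : Set X) : Prop :=
  IsMinimalSet f M ∧ ∀ hM : Set.MapsTo f M M, Nonempty (AAWitness (restrictMap hM))

/-- `M` is an almost periodic minimal set of `f`: the family of iterates of the
restriction of `f` to `M` is equicontinuous. -/
def IsAPMinimal {X : Type*} [MetricSpace X] (f : X → X) (M : Set X) : Prop :=
  IsMinimalSet f M ∧ ∀ hM : Set.MapsTo f M M, AlmostPeriodicMap (restrictMap hM)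

/-- A subset of a product is pinched if some fibre is a singleton. -/
def Pinched {Θ X : Type*} (A : Set (Θ × X)) : Prop := ∃ θ : Θ, ∃! x : X, (θ, x) ∈ A

/-- An `α`-forced increasing interval map on `Θ × I`: a continuous skew product over `α`
whose fibre maps are strictly increasing. -/
def ForcedIncreasing {Θ : Type*} [TopologicalSpace Θ] {I : Set ℝ} (α : Θ → Θ)
    (f : Θ × ↥I → Θ × ↥I) : Prop :=
  Continuous f ∧ (∀ p : Θ × ↥I, (f p).1 = α p.1) ∧
    ∀ θ : Θ, StrictMono fun x : ↥I => (f (θ, x)).2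

/-- The fibre of `M ⊆ Θ × I` over `θ`, as a set of reals. -/
def fiberSet {Θ : Type*} {I : Set ℝ} (M : Set (Θ × ↥I)) (θ : Θ) : Set ℝ :=
  (fun x : ↥I => (x : ℝ)) '' {x : ↥I | (θ, x) ∈ M}

/-- The filled-in envelope `[φ⁻_M, φ⁺_M]` of `M`, where `φ⁻_M(θ) = inf M_θ` and
`φ⁺_M(θ) = sup M_θ`. -/
def FilledEnvelope {Θ : Type*} {I : Set ℝ} (M : Set (Θ × ↥I)) : Set (Θ × ↥I) :=
  {p : Θ × ↥I | sInf (fiberSet M p.1) ≤ (p.2 : ℝ) ∧ (p.2 : ℝ) ≤ sSup (fiberSet M p.1)}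

/-- The graph of a curve `γ : Θ → I`. -/
def curveGraph {Θ : Type*} {I : Set ℝ} (γ : Θ → ↥I) : Set (Θ × ↥I) :=
  {p : Θ × ↥I | p.2 = γ p.1}

/-- The conclusion of the blow-up construction (properties (i)-(v) of the main theorem):
`f̂` is a topological extension of `f` via the fibre-respecting factor map `h`, `f̂` is an
`α`-forced increasing interval map, the fibre maps of `h` are non-decreasing, `h` is
injective off `h⁻¹(Γ)`, countably many points of `Γ` have non-degenerate vertical-segment
preimages while all other points of `Γ` have singleton preimages, and `h⁻¹(Γ)` contains
the graph of no continuous curve. -/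
def BlowUpConclusion {Θ : Type*} [TopologicalSpace Θ] {I : Set ℝ}
    (α : Θ → Θ) (f : Θ × ↥I → Θ × ↥I) (γ : Θ → ↥I)
    (fhat : Θ × ↥I → Θ × ↥I) (h : Θ × ↥I → Θ × ↥I) : Prop :=
  IsFactorMap fhat f h ∧ (∀ p : Θ × ↥I, (h p).1 = p.1) ∧
  ForcedIncreasing α fhat ∧
  (∀ θ : Θ, Monotone fun x : ↥I => (h (θ, x)).2) ∧
  Set.InjOn h (h ⁻¹' curveGraph γ)ᶜ ∧
  (∃ C : Set (Θ × ↥I), C ⊆ curveGraph γ ∧ C.Countable ∧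
    (∀ p ∈ C, ∃ x₁ x₂ : ↥I, x₁ < x₂ ∧ h ⁻¹' {p} = {p.1} ×ˢ Set.Icc x₁ x₂) ∧
    (∀ p ∈ curveGraph γ \ C, ∃ x : ↥I, h ⁻¹' {p} = {(p.1, x)})) ∧
  (∀ η : Θ → ↥I, Continuous η → ¬ (curveGraph η ⊆ h ⁻¹' curveGraph γ))


/-- The identification of `T¹` with `[0,1)`. -/
def lift1 : T1 → ℝ := fun x => ((AddCircle.equivIco 1 0 x : ↥(Set.Ico (0:ℝ) (0+1))) : ℝ)

/-! ### Monotone maps with compact interval fibres -/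

/-- A monotone map `H` whose fibre over each `y` is the nonempty interval `[L y, K y]`. -/
structure HasIccFibers {α β : Type*} [Preorder α] [Preorder β] (H : α → β) (L K : β → α) :
    Prop where
  monotone : Monotone H
  le : ∀ y, L y ≤ K y
  apply_eq_iff : ∀ {s y}, H s = y ↔ s ∈ Icc (L y) (K y)

/-- For `H` with fibres `[L y, K y]`, the lift of `g` through `H` which maps the fibre over `y`
affinely onto the fibre over `g y`. On a one-point fibre the quotient is `0 / 0 = 0`, so that
the point is sent to the left end of the target fibre. -/
def fiberAffine {𝕜 β : Type*} [Field 𝕜] (H : 𝕜 → β) (L K : β → 𝕜) (g : β → β) (s : 𝕜) : 𝕜 :=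
  L (g (H s)) + (s - L (H s)) / (K (H s) - L (H s)) * (K (g (H s)) - L (g (H s)))

namespace HasIccFibers

section Field

variable {𝕜 β : Type*} [Field 𝕜] [LinearOrder 𝕜] {H : 𝕜 → β} {L K : β → 𝕜}

theorem fiberAffine_right_end [Preorder β] (hH : HasIccFibers H L K) {g : β → β} {y : β}
    (hg : L y = K y → L (g y) = K (g y)) : fiberAffine H L K g (K y) = K (g y) := by
  have hy : H (K y) = y := hH.apply_eq_iff.2 (right_mem_Icc.2 (hH.le y))
  rw [fiberAffine, hy]
  by_cases hLK : L y = K y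
  · rw [hg hLK, sub_self, mul_zero, add_zero]
  · rw [div_self (sub_ne_zero.2 (Ne.symm hLK)), one_mul, add_sub_cancel]

variable [IsStrictOrderedRing 𝕜]

theorem fiberAffine_mem_Icc [Preorder β] (hH : HasIccFibers H L K) (g : β → β) (s : 𝕜) :
    fiberAffine H L K g s ∈ Icc (L (g (H s))) (K (g (H s))) := by
  obtain ⟨hLs, hsK⟩ := hH.apply_eq_iff.1 (rfl : H s = H s)
  have hwidth : 0 ≤ K (g (H s)) - L (g (H s)) := sub_nonneg.2 (hH.le _)
  have hratio : 0 ≤ (s - L (H s)) / (K (H s) - L (H s)) :=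
    div_nonneg (sub_nonneg.2 hLs) (sub_nonneg.2 (hH.le _))
  have hratio' : (s - L (H s)) / (K (H s) - L (H s)) ≤ 1 :=
    div_le_one_of_le₀ (by linarith) (sub_nonneg.2 (hH.le _))
  have hnonneg := mul_nonneg hratio hwidth
  have hle := mul_le_of_le_one_left hwidth hratio'
  constructor <;> unfold fiberAffine <;> linarith

theorem apply_fiberAffine [Preorder β] (hH : HasIccFibers H L K) (g : β → β) (s : 𝕜) :
    H (fiberAffine H L K g s) = g (H s) :=
  hH.apply_eq_iff.2 (hH.fiberAffine_mem_Icc g s)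

theorem fiberAffine_leftInverse [Preorder β] (hH : HasIccFibers H L K) {g g' : β → β}
    (hgg' : LeftInverse g' g) (hg : ∀ y, L (g y) = K (g y) → L y = K y) :
    LeftInverse (fiberAffine H L K g') (fiberAffine H L K g) := by
  intro s
  rw [fiberAffine, hH.apply_fiberAffine, hgg', fiberAffine, add_sub_cancel_left]
  by_cases hLK : L (H s) = K (H s)
  · have hs := hH.apply_eq_iff.1 (rfl : H s = H s)
    rw [← hLK, sub_self, mul_zero, add_zero]
    exact le_antisymm hs.1 (hs.2.trans hLK.ge)
  · have hne : K (H s) - L (H s) ≠ 0 := sub_ne_zero.2 (Ne.symm hLK)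
    have hne' : K (g (H s)) - L (g (H s)) ≠ 0 := sub_ne_zero.2 fun h => hLK (hg _ h.symm)
    rw [mul_div_cancel_right₀ _ hne', div_mul_cancel₀ _ hne, add_sub_cancel]

theorem fiberAffine_monotone [LinearOrder β] (hH : HasIccFibers H L K) {g : β → β}
    (hg : StrictMono g) : Monotone (fiberAffine H L K g) := by
  intro s t hst
  rcases (hH.monotone hst).eq_or_lt with hst' | hst'
  · have hsource : 0 ≤ K (H t) - L (H t) := sub_nonneg.2 (hH.le _)
    have htarget : 0 ≤ K (g (H t)) - L (g (H t)) := sub_nonneg.2 (hH.le _)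
    rw [fiberAffine, fiberAffine, hst']
    gcongr
  · refine (hH.monotone.reflect_lt ?_).le
    simpa only [hH.apply_fiberAffine] using hg hst'

end Field

section DegreeOne

variable {H L K : ℝ → ℝ}

theorem map_add_one (hH : HasIccFibers H L K) (hL : ∀ y, L (y + 1) = L y + 1)
    (hK : ∀ y, K (y + 1) = K y + 1) (s : ℝ) : H (s + 1) = H s + 1 := by
  have hs := hH.apply_eq_iff.1 (rfl : H s = H s)
  rw [hH.apply_eq_iff, hL, hK]
  exact ⟨add_le_add_left hs.1 1, add_le_add_left hs.2 1⟩

theorem fiberAffine_map_add_one (hH : HasIccFibers H L K) (hL : ∀ y, L (y + 1) = L y + 1)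
    (hK : ∀ y, K (y + 1) = K y + 1) {g : ℝ → ℝ} (hg : ∀ y, g (y + 1) = g y + 1) (s : ℝ) :
    fiberAffine H L K g (s + 1) = fiberAffine H L K g s + 1 := by
  simp only [fiberAffine, hH.map_add_one hL hK, hg, hL, hK, add_sub_add_right_eq_sub]
  ring

/-- The degree-one lift of the Denjoy homeomorphism: the fibrewise affine lift through `H` of the
translation by `ρ`, the inverse being the lift of the translation by `-ρ`. -/
def denjoyLift (hH : HasIccFibers H L K) (hL : ∀ y, L (y + 1) = L y + 1)
    (hK : ∀ y, K (y + 1) = K y + 1) (ρ : ℝ)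
    (hρ : ∀ y, L (y + ρ) = K (y + ρ) ↔ L y = K y) : CircleDeg1Liftˣ where
  val :=
    { toFun := fiberAffine H L K (· + ρ)
      monotone' := hH.fiberAffine_monotone add_left_strictMono
      map_add_one' := hH.fiberAffine_map_add_one hL hK fun y => add_right_comm y 1 ρ }
  inv :=
    { toFun := fiberAffine H L K (· - ρ)
      monotone' := hH.fiberAffine_monotone fun _ _ h => sub_lt_sub_right h ρ
      map_add_one' := hH.fiberAffine_map_add_one hL hK fun y => add_sub_right_comm y 1 ρ }
  val_inv := CircleDeg1Lift.ext fun s =>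
    hH.fiberAffine_leftInverse (g := (· - ρ)) (g' := (· + ρ)) (sub_add_cancel · ρ)
      (fun y => by simpa only [sub_add_cancel] using (hρ (y - ρ)).2) s
  inv_val := CircleDeg1Lift.ext fun s =>
    hH.fiberAffine_leftInverse (g := (· + ρ)) (g' := (· - ρ)) (add_sub_cancel_right · ρ)
      (fun y => (hρ y).1) s

theorem translationNumber_denjoyLift (hH : HasIccFibers H L K) (hL : ∀ y, L (y + 1) = L y + 1)
    (hK : ∀ y, K (y + 1) = K y + 1) (ρ : ℝ)
    (hρ : ∀ y, L (y + ρ) = K (y + ρ) ↔ L y = K y) :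
    CircleDeg1Lift.translationNumber (hH.denjoyLift hL hK ρ hρ) = ρ := by
  let H' : CircleDeg1Lift := ⟨⟨H, hH.monotone⟩, hH.map_add_one hL hK⟩
  have hsemi : Semiconj H' (hH.denjoyLift hL hK ρ hρ)
      (CircleDeg1Lift.translate (Multiplicative.ofAdd ρ)) := fun s => by
    rw [CircleDeg1Lift.translate_apply, add_comm]
    exact hH.apply_fiberAffine (· + ρ) s
  rw [CircleDeg1Lift.translationNumber_eq_of_semiconj hsemi,
    CircleDeg1Lift.translationNumber_translate]

end DegreeOne

end HasIccFibers

/-! ### Circle homeomorphisms induced by degree-one lifts -/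

/-- The circle map induced by a degree-one map of the line. -/
def inducedCircleMap (F : CircleDeg1Lift) : T1 → T1 :=
  Periodic.lift (f := fun t : ℝ => ((F t : ℝ) : T1)) (c := 1) fun t => by
    simp only [F.map_add_one, AddCircle.coe_add_period]

theorem inducedCircleMap_coe (F : CircleDeg1Lift) (t : ℝ) :
    inducedCircleMap F (t : T1) = ((F t : ℝ) : T1) := rfl

theorem continuous_inducedCircleMap {F : CircleDeg1Lift} (hF : Continuous F) :
    Continuous (inducedCircleMap F) :=
  ((AddCircle.continuous_mk' 1).comp hF).quotient_lift _

/-- The circle homeomorphism induced by an invertible degree-one map of the line. -/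
def inducedCircleHomeo (F : CircleDeg1Liftˣ) : T1 ≃ₜ T1 where
  toFun := inducedCircleMap F
  invFun := inducedCircleMap ↑F⁻¹
  left_inv z := by
    obtain ⟨t, rfl⟩ := QuotientAddGroup.mk_surjective z
    simp [inducedCircleMap_coe]
  right_inv z := by
    obtain ⟨t, rfl⟩ := QuotientAddGroup.mk_surjective z
    simp [inducedCircleMap_coe]
  continuous_toFun := continuous_inducedCircleMap (CircleDeg1Lift.toOrderIso F).continuous
  continuous_invFun := continuous_inducedCircleMap (CircleDeg1Lift.toOrderIso F⁻¹).continuous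

theorem inducedCircleHomeo_coe (F : CircleDeg1Liftˣ) (t : ℝ) :
    inducedCircleHomeo F (t : T1) = ((F t : ℝ) : T1) := rfl

theorem toIcoMod_map_circleDeg1Lift {F : CircleDeg1Lift} (hF : StrictMono F) (s t : ℝ) :
    toIcoMod one_pos (F s) (F t) = F (toIcoMod one_pos s t) := by
  refine (toIcoMod_eq_iff one_pos).2 ⟨⟨F.mono (left_le_toIcoMod _ _ _), ?_⟩,
    toIcoDiv one_pos s t, ?_⟩
  · rw [← F.map_add_one]
    exact hF (toIcoMod_lt_right _ _ _)
  · rw [zsmul_one, ← F.map_add_int, ← zsmul_one, toIcoMod_add_toIcoDiv_zsmul]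

theorem toIocMod_map_circleDeg1Lift {F : CircleDeg1Lift} (hF : StrictMono F) (s t : ℝ) :
    toIocMod one_pos (F s) (F t) = F (toIocMod one_pos s t) := by
  refine (toIocMod_eq_iff one_pos).2 ⟨⟨hF (left_lt_toIocMod _ _ _), ?_⟩,
    toIocDiv one_pos s t, ?_⟩
  · rw [← F.map_add_one]
    exact F.mono (toIocMod_le_right _ _ _)
  · rw [zsmul_one, ← F.map_add_int, ← zsmul_one, toIocMod_add_toIocDiv_zsmul]

theorem btw_inducedCircleHomeo_iff (F : CircleDeg1Liftˣ) (u v w : T1) :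
    btw (inducedCircleHomeo F u) (inducedCircleHomeo F v) (inducedCircleHomeo F w) ↔
      btw u v w := by
  have hF : StrictMono F := (CircleDeg1Lift.toOrderIso F).strictMono
  obtain ⟨u, rfl⟩ := QuotientAddGroup.mk_surjective u
  obtain ⟨v, rfl⟩ := QuotientAddGroup.mk_surjective v
  obtain ⟨w, rfl⟩ := QuotientAddGroup.mk_surjective w
  simp only [inducedCircleHomeo_coe, QuotientAddGroup.btw_coe_iff]
  rw [toIcoMod_map_circleDeg1Lift hF, toIocMod_map_circleDeg1Lift hF, hF.le_iff_le]

theorem sbtw_inducedCircleHomeo_iff (F : CircleDeg1Liftˣ) (u v w : T1) :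
    sbtw (inducedCircleHomeo F u) (inducedCircleHomeo F v) (inducedCircleHomeo F w) ↔
      sbtw u v w := by
  simp only [sbtw_iff_not_btw, btw_inducedCircleHomeo_iff]

/-! ### The fundamental domain -/

theorem lift1_coe (t : ℝ) : lift1 (t : T1) = Int.fract t := by
  simp [lift1, AddCircle.coe_equivIco_mk_apply]

theorem coe_lift1 (z : T1) : ((lift1 z : ℝ) : T1) = z := AddCircle.coe_equivIco

theorem lift1_injective : Injective lift1 := LeftInverse.injective coe_lift1

theorem lift1_mem_Ico (z : T1) : lift1 z ∈ Ico (0 : ℝ) 1 := by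
  simpa only [lift1, zero_add] using (AddCircle.equivIco (1 : ℝ) 0 z).2

theorem lift1_coe_of_mem_Ico {t : ℝ} (ht : t ∈ Ico (0 : ℝ) 1) : lift1 (t : T1) = t :=
  (lift1_coe t).trans (Int.fract_eq_self.2 ht)

theorem measurable_lift1 : Measurable lift1 :=
  measurable_subtype_coe.comp (AddCircle.measurableEquivIco (1 : ℝ) 0).measurable

/-- The extension of `k : T¹ → ℝ`, viewed as a function on `[0, 1)`, to a function on the line
commuting with the translation by one. -/
def lineLift (k : T1 → ℝ) (t : ℝ) : ℝ := k t + ⌊t⌋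

theorem lineLift_add_one (k : T1 → ℝ) (t : ℝ) : lineLift k (t + 1) = lineLift k t + 1 := by
  rw [lineLift, lineLift, AddCircle.coe_add_period, Int.floor_add_one, Int.cast_add, Int.cast_one,
    add_assoc]

theorem coe_lineLift (k : T1 → ℝ) (t : ℝ) : ((lineLift k t : ℝ) : T1) = (k t : T1) := by
  have hfloor : ((⌊t⌋ : ℝ) : T1) = 0 := (AddCircle.coe_eq_zero_iff _).2 ⟨⌊t⌋, zsmul_one _⟩
  rw [lineLift, AddCircle.coe_add, hfloor, add_zero]

theorem lineLift_lift1 (t : ℝ) : lineLift lift1 t = t := by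
  rw [lineLift, lift1_coe, Int.fract_add_floor]

theorem floor_lineLift {k : T1 → ℝ} {t : ℝ} (hk : k t ∈ Ico (0 : ℝ) 1) :
    ⌊lineLift k t⌋ = ⌊t⌋ := by
  rw [lineLift, Int.floor_add_intCast, Int.floor_eq_zero_iff.2 hk, zero_add]

theorem lineLift_le_lineLift_iff {k l : T1 → ℝ} {s t : ℝ} (hst : ⌊s⌋ = ⌊t⌋) :
    lineLift k s ≤ lineLift l t ↔ k s ≤ l t := by
  rw [lineLift, lineLift, hst, add_le_add_iff_right]

theorem lineLift_monotone {k : T1 → ℝ} (hk : ∀ z, k z ∈ Ico (0 : ℝ) 1)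
    (hmono : ∀ z w, lift1 z ≤ lift1 w → k z ≤ k w) : Monotone (lineLift k) := by
  intro s t hst
  rcases (Int.floor_mono hst).eq_or_lt with hfloor | hfloor
  · rw [lineLift_le_lineLift_iff hfloor]
    rw [← lineLift_lift1 s, ← lineLift_lift1 t, lineLift_le_lineLift_iff hfloor] at hst
    exact hmono _ _ hst
  · refine (Int.floor_mono.reflect_lt ?_).le
    rwa [floor_lineLift (hk _), floor_lineLift (hk _)]

/-! ### Distribution functions and quantile maps on the circle -/

/-- The distribution function `t ↦ ν[0, t]` of a probability measure on `T¹ = [0, 1)`. -/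
def circleCDF (ν : Measure T1) : StieltjesFunction ℝ := ProbabilityTheory.cdf (ν.map lift1)

/-- The right end `ν[0, y]` of the fibre of the quantile map over `y`. -/
def fiberMax (ν : Measure T1) (y : T1) : ℝ := circleCDF ν (lift1 y)

/-- The left end `ν[0, y)` of the fibre of the quantile map over `y`. -/
def fiberMin (ν : Measure T1) (y : T1) : ℝ := leftLim (circleCDF ν) (lift1 y)

/-- `h` is the quantile map of `ν`: under `T¹ = [0, 1)`, the point `h z` is the least `y` with
`z ≤ ν[0, y]`. -/
def IsQuantileMap (ν : Measure T1) (h : T1 → T1) : Prop :=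
  ∀ z, ENNReal.ofReal (lift1 z) ≤ ν {w | lift1 w ≤ lift1 (h z)} ∧
    ∀ y, ENNReal.ofReal (lift1 z) ≤ ν {w | lift1 w ≤ lift1 y} → lift1 (h z) ≤ lift1 y

section CircleCDF

variable {ν : Measure T1}

theorem circleCDF_nonneg (t : ℝ) : 0 ≤ circleCDF ν t := ProbabilityTheory.cdf_nonneg _ t

theorem fiberMin_le_fiberMax (y : T1) : fiberMin ν y ≤ fiberMax ν y :=
  (circleCDF ν).mono.leftLim_le le_rfl

theorem fiberMin_nonneg (y : T1) : 0 ≤ fiberMin ν y :=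
  (circleCDF_nonneg _).trans ((circleCDF ν).mono.le_leftLim (sub_one_lt (lift1 y)))

variable [IsProbabilityMeasure ν]

theorem measure_circleCDF : (circleCDF ν).measure = ν.map lift1 := by
  have := Measure.isProbabilityMeasure_map (μ := ν) measurable_lift1.aemeasurable
  exact ProbabilityTheory.measure_cdf _

theorem ofReal_circleCDF (t : ℝ) :
    ENNReal.ofReal (circleCDF ν t) = ν {w | lift1 w ≤ t} := by
  have := Measure.isProbabilityMeasure_map (μ := ν) measurable_lift1.aemeasurable
  exact (ProbabilityTheory.ofReal_cdf _ t).trans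
    (Measure.map_apply measurable_lift1 measurableSet_Iic)

theorem circleCDF_of_neg {t : ℝ} (ht : t < 0) : circleCDF ν t = 0 := by
  have hempty : {w : T1 | lift1 w ≤ t} = ∅ :=
    eq_empty_of_forall_notMem fun w hw => (ht.trans_le (lift1_mem_Ico w).1).not_ge hw
  have hzero := ofReal_circleCDF (ν := ν) t
  rw [hempty, measure_empty, ENNReal.ofReal_eq_zero] at hzero
  exact hzero.antisymm (circleCDF_nonneg t)

theorem fiberMin_eq_fiberMax_iff (y : T1) : fiberMin ν y = fiberMax ν y ↔ ν {y} = 0 := by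
  have hpreimage : lift1 ⁻¹' {lift1 y} = {y} := by
    rw [← image_singleton, lift1_injective.preimage_image]
  rw [← hpreimage, ← Measure.map_apply measurable_lift1 (measurableSet_singleton _),
    ← measure_circleCDF, StieltjesFunction.measure_singleton, ENNReal.ofReal_eq_zero,
    sub_nonpos]
  exact ⟨fun heq => heq.ge, fun hle => (fiberMin_le_fiberMax y).antisymm hle⟩

theorem ofReal_le_measure_iff {s t : ℝ} :
    ENNReal.ofReal s ≤ ν {w | lift1 w ≤ t} ↔ s ≤ circleCDF ν t := by
  rw [← ofReal_circleCDF, ENNReal.ofReal_le_ofReal_iff (circleCDF_nonneg t)]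

theorem circleCDF_strictMonoOn [ν.IsOpenPosMeasure] : StrictMonoOn (circleCDF ν) (Icc 0 1) := by
  intro s hs t ht hst
  have hsub : ((↑) : ℝ → T1) '' Ioo s t ⊆ lift1 ⁻¹' Ioc s t := by
    rintro _ ⟨r, hr, rfl⟩
    rw [mem_preimage, lift1_coe_of_mem_Ico ⟨hs.1.trans hr.1.le, hr.2.trans_le ht.2⟩]
    exact Ioo_subset_Ioc_self hr
  have hpos : 0 < ν (((↑) : ℝ → T1) '' Ioo s t) :=
    (QuotientAddGroup.isOpenMap_coe _ isOpen_Ioo).measure_pos ν ((nonempty_Ioo.2 hst).image _)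
  have hIoc : 0 < (circleCDF ν).measure (Ioc s t) := by
    rw [measure_circleCDF, Measure.map_apply measurable_lift1 measurableSet_Ioc]
    exact hpos.trans_le (measure_mono hsub)
  simpa using hIoc

theorem fiberMax_lt_one [ν.IsOpenPosMeasure] (y : T1) : fiberMax ν y < 1 :=
  (circleCDF_strictMonoOn (Ico_subset_Icc_self (lift1_mem_Ico y)) (right_mem_Icc.2 zero_le_one)
    (lift1_mem_Ico y).2).trans_le (ProbabilityTheory.cdf_le_one _ _)

theorem fiberMin_mem_Ico [ν.IsOpenPosMeasure] (y : T1) : fiberMin ν y ∈ Ico (0 : ℝ) 1 :=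
  ⟨fiberMin_nonneg y, (fiberMin_le_fiberMax y).trans_lt (fiberMax_lt_one y)⟩

theorem fiberMax_mem_Ico [ν.IsOpenPosMeasure] (y : T1) : fiberMax ν y ∈ Ico (0 : ℝ) 1 :=
  ⟨(fiberMin_nonneg y).trans (fiberMin_le_fiberMax y), fiberMax_lt_one y⟩

theorem fiberMax_lt_fiberMin [ν.IsOpenPosMeasure] {y y' : T1} (hy : lift1 y < lift1 y') :
    fiberMax ν y < fiberMin ν y' := by
  obtain ⟨t, hyt, hty'⟩ := exists_between hy
  have htmem : t ∈ Icc (0 : ℝ) 1 :=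
    ⟨(lift1_mem_Ico y).1.trans hyt.le, hty'.le.trans (lift1_mem_Ico y').2.le⟩
  exact (circleCDF_strictMonoOn (Ico_subset_Icc_self (lift1_mem_Ico y)) htmem hyt).trans_le
    ((circleCDF ν).mono.le_leftLim hty')

end CircleCDF

namespace IsQuantileMap

variable {ν : Measure T1} [IsProbabilityMeasure ν] {h : T1 → T1}

theorem lift1_le_fiberMax (hh : IsQuantileMap ν h) (z : T1) : lift1 z ≤ fiberMax ν (h z) :=
  ofReal_le_measure_iff.1 (hh z).1

theorem lift1_apply_le (hh : IsQuantileMap ν h) {z y : T1} (hzy : lift1 z ≤ fiberMax ν y) :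
    lift1 (h z) ≤ lift1 y :=
  (hh z).2 y (ofReal_le_measure_iff.2 hzy)

theorem lift1_apply_mono (hh : IsQuantileMap ν h) {z w : T1} (hzw : lift1 z ≤ lift1 w) :
    lift1 (h z) ≤ lift1 (h w) :=
  hh.lift1_apply_le (hzw.trans (hh.lift1_le_fiberMax w))

theorem fiberMin_le_lift1 (hh : IsQuantileMap ν h) (z : T1) : fiberMin ν (h z) ≤ lift1 z := by
  refine le_of_tendsto ((circleCDF ν).mono.tendsto_leftLim (lift1 (h z)))
    (eventually_nhdsWithin_of_forall fun t ht => ?_)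
  rcases lt_or_ge t 0 with hneg | hnonneg
  · rw [circleCDF_of_neg hneg]
    exact (lift1_mem_Ico z).1
  · have ht' : lift1 (t : T1) = t :=
      lift1_coe_of_mem_Ico ⟨hnonneg, lt_trans ht (lift1_mem_Ico (h z)).2⟩
    by_contra! hlt
    have hle := hh.lift1_apply_le (y := (t : T1))
      (hlt.le.trans_eq (congrArg (circleCDF ν) ht'.symm))
    exact hle.not_gt (ht'.trans_lt (mem_Iio.1 ht))

variable [ν.IsOpenPosMeasure]

theorem apply_eq_iff (hh : IsQuantileMap ν h) {z y : T1} :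
    h z = y ↔ lift1 z ∈ Icc (fiberMin ν y) (fiberMax ν y) := by
  refine ⟨?_, fun hz => lift1_injective ((hh.lift1_apply_le hz.2).eq_of_not_lt fun hlt => ?_)⟩
  · rintro rfl
    exact ⟨hh.fiberMin_le_lift1 z, hh.lift1_le_fiberMax z⟩
  · exact ((hh.lift1_le_fiberMax z).trans_lt (fiberMax_lt_fiberMin hlt)).not_ge hz.1

theorem coe_fiberMax_eq (hh : IsQuantileMap ν h) {y c d : T1}
    (hcd : h ⁻¹' {y} = {z | lift1 c ≤ lift1 z ∧ lift1 z ≤ lift1 d}) :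
    (fiberMax ν y : T1) = d := by
  have hmax : lift1 (fiberMax ν y : T1) = fiberMax ν y :=
    lift1_coe_of_mem_Ico (fiberMax_mem_Ico y)
  have hmem : (fiberMax ν y : T1) ∈ h ⁻¹' {y} :=
    hh.apply_eq_iff.2 (by rw [hmax]; exact right_mem_Icc.2 (fiberMin_le_fiberMax y))
  rw [hcd] at hmem
  have hd : d ∈ h ⁻¹' {y} := by
    rw [hcd]
    exact ⟨hmem.1.trans hmem.2, le_rfl⟩
  exact lift1_injective (hmem.2.antisymm (hmax.symm ▸ (hh.apply_eq_iff.1 hd).2))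

theorem mem_diff_iUnion_iff (hh : IsQuantileMap ν h) {ι : Type*} {x c d : ι → T1}
    (hcd : ∀ i, h ⁻¹' {x i} = {z | lift1 (c i) ≤ lift1 z ∧ lift1 z ≤ lift1 (d i)}) {z : T1} :
    z ∈ univ \ ⋃ i, {z | lift1 (c i) ≤ lift1 z ∧ lift1 z < lift1 (d i)} ↔
      (h z ∈ range x → z = (fiberMax ν (h z) : T1)) := by
  have hfiber (i : ι) : h z = x i ↔ lift1 (c i) ≤ lift1 z ∧ lift1 z ≤ lift1 (d i) :=
    Set.ext_iff.1 (hcd i) z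
  simp only [mem_sdiff, mem_univ, true_and, mem_iUnion, mem_ofPred_eq, not_exists, not_and, not_lt]
  constructor
  · rintro hz ⟨i, hi⟩
    obtain ⟨hcz, hzd⟩ := (hfiber i).1 hi.symm
    rw [← hi, hh.coe_fiberMax_eq (hcd i)]
    exact lift1_injective (hzd.antisymm (hz i hcz))
  · intro hz i hcz
    by_contra! hzd
    have hi := (hfiber i).2 ⟨hcz, hzd.le⟩
    have hzmax := hz ⟨i, hi.symm⟩
    rw [hi, hh.coe_fiberMax_eq (hcd i)] at hzmax
    exact hzd.ne (congrArg lift1 hzmax)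

theorem hasIccFibers_lineLift (hh : IsQuantileMap ν h) :
    HasIccFibers (lineLift (lift1 ∘ h)) (lineLift (fiberMin ν)) (lineLift (fiberMax ν)) where
  monotone := lineLift_monotone (fun z => lift1_mem_Ico (h z)) fun _ _ => hh.lift1_apply_mono
  le y := (lineLift_le_lineLift_iff rfl).2 (fiberMin_le_fiberMax _)
  apply_eq_iff {s y} := by
    have hfiber (hfloor : ⌊s⌋ = ⌊y⌋) : h s = y ↔
        s ∈ Icc (lineLift (fiberMin ν) y) (lineLift (fiberMax ν) y) := by
      conv_rhs => rw [← lineLift_lift1 s]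
      rw [mem_Icc, lineLift_le_lineLift_iff hfloor, lineLift_le_lineLift_iff hfloor.symm,
        hh.apply_eq_iff, mem_Icc]
    constructor
    · rintro rfl
      refine (hfiber (floor_lineLift (k := lift1 ∘ h) (lift1_mem_Ico _)).symm).1 ?_
      rw [coe_lineLift, comp_apply, coe_lift1]
    · intro hs
      have hfloor : ⌊s⌋ = ⌊y⌋ := le_antisymm
        ((Int.floor_mono hs.2).trans_eq (floor_lineLift (fiberMax_mem_Ico _)))
        ((floor_lineLift (fiberMin_mem_Ico _)).symm.trans_le (Int.floor_mono hs.1))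
      rw [lineLift, comp_apply, (hfiber hfloor).2 hs, hfloor]
      exact lineLift_lift1 y

theorem exists_denjoyLift (hh : IsQuantileMap ν h) {ρ : ℝ}
    (hρ : ∀ y : T1, ν {y + (ρ : T1)} = 0 ↔ ν {y} = 0) :
    ∃ F : CircleDeg1Liftˣ, (∀ z, h (inducedCircleHomeo F z) = h z + (ρ : T1)) ∧
      (∀ y : T1, inducedCircleHomeo F (fiberMax ν y : T1) = (fiberMax ν (y + (ρ : T1)) : T1)) ∧
      CircleDeg1Lift.translationNumber F = ρ := by
  have hfib := hh.hasIccFibers_lineLift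
  have hdeg (y : ℝ) : lineLift (fiberMin ν) y = lineLift (fiberMax ν) y ↔ ν {(y : T1)} = 0 := by
    rw [lineLift, lineLift, add_left_inj, fiberMin_eq_fiberMax_iff]
  have hjump (y : ℝ) : lineLift (fiberMin ν) (y + ρ) = lineLift (fiberMax ν) (y + ρ) ↔
      lineLift (fiberMin ν) y = lineLift (fiberMax ν) y := by
    rw [hdeg, hdeg, AddCircle.coe_add, hρ]
  have hcoe (t : ℝ) : ((lineLift (lift1 ∘ h) t : ℝ) : T1) = h t := by
    rw [coe_lineLift, comp_apply, coe_lift1]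
  refine ⟨hfib.denjoyLift (lineLift_add_one _) (lineLift_add_one _) ρ hjump, fun z => ?_,
    fun y => ?_, hfib.translationNumber_denjoyLift _ _ ρ hjump⟩
  · obtain ⟨t, rfl⟩ := QuotientAddGroup.mk_surjective z
    rw [inducedCircleHomeo_coe, ← hcoe, ← hcoe, ← AddCircle.coe_add]
    exact congrArg _ (hfib.apply_fiberAffine (· + ρ) t)
  · obtain ⟨t, rfl⟩ := QuotientAddGroup.mk_surjective y
    rw [← coe_lineLift, inducedCircleHomeo_coe, ← AddCircle.coe_add, ← coe_lineLift]
    exact congrArg _ (hfib.fiberAffine_right_end (g := (· + ρ)) (hjump t).2)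

end IsQuantileMap

/-! ### Extensions of rotations -/

section Semiconj

variable {X G : Type*} [AddGroup G] {f : Equiv.Perm X} {h : X → G} {ρ : G}

theorem image_fiber_of_semiconj_add (hf : ∀ z, h (f z) = h z + ρ) (y : G) :
    f '' (h ⁻¹' {y}) = h ⁻¹' {y + ρ} := by
  ext z
  rw [f.image_eq_preimage_symm, mem_preimage, mem_preimage, mem_preimage, mem_singleton_iff,
    mem_singleton_iff, ← add_left_inj ρ, ← hf, f.apply_symm_apply]

theorem apply_zIter_of_semiconj_add (hf : ∀ z, h (f z) = h z + ρ) (n : ℤ) (z : X) :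
    h (zIter f n z) = h z + n • ρ := by
  unfold zIter
  induction n generalizing z with
  | zero => simp
  | succ i ih =>
    rw [zpow_add_one, Equiv.Perm.mul_apply, ih, hf, add_assoc, add_comm (i : ℤ), one_add_zsmul]
  | pred i ih =>
    have hinv : h (f⁻¹ z) = h z - ρ := by
      rw [eq_sub_iff_add_eq, ← hf]
      exact congrArg h (f.apply_symm_apply z)
    rw [zpow_sub_one, Equiv.Perm.mul_apply, ih, hinv, sub_eq_add_neg,
      sub_eq_neg_add, add_zsmul, neg_one_zsmul, add_assoc]

theorem disjoint_zIter_image_of_semiconj_add (hf : ∀ z, h (f z) = h z + ρ)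
    (hρ : Injective fun n : ℤ => n • ρ) {U : Set X} {y : G} (hU : U ⊆ h ⁻¹' {y}) {m k : ℤ}
    (hmk : m ≠ k) : Disjoint (zIter f m '' U) (zIter f k '' U) := by
  refine disjoint_image_image fun u hu v hv huv => hmk (hρ ?_)
  have hheq := congrArg h huv
  rw [apply_zIter_of_semiconj_add hf, apply_zIter_of_semiconj_add hf, hU hu, hU hv] at hheq
  exact add_left_cancel hheq

end Semiconj

theorem injective_zsmul_coe_of_irrational {ρ : ℝ} (hρ : Irrational ρ) :
    Injective fun n : ℤ => n • (ρ : T1) := by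
  rw [injective_zsmul_iff_not_isOfFinAddOrder, AddCircle.not_isOfFinAddOrder_iff_forall_rat_ne_div]
  intro q hq
  exact hρ ⟨q, by rw [hq, div_one]⟩

theorem mem_range_add_iff_of_succ {G : Type*} [AddGroup G] {ρ : G} {x : ℤ → G}
    (hx : ∀ n, x (n + 1) = x n + ρ) {y : G} : y + ρ ∈ range x ↔ y ∈ range x := by
  constructor
  · rintro ⟨n, hn⟩
    refine ⟨n - 1, add_right_cancel (b := ρ) ?_⟩
    rw [← hx, sub_add_cancel, hn]
  · rintro ⟨n, rfl⟩
    exact ⟨n + 1, hx n⟩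

/-! ### Mixtures of point masses with a diffuse measure -/

section AtomicMixture

variable {ι Ω : Type*} [MeasurableSpace Ω]

/-- The measure `∑ᵢ aᵢ δ_{xᵢ} + (1 - ∑ᵢ aᵢ) μ`, the form of the measure in the Denjoy construction.
Negative weights are truncated to `0`. -/
def atomicMixture (a : ι → ℝ) (x : ι → Ω) (μ : Measure Ω) : Measure Ω :=
  Measure.sum (fun i => ENNReal.ofReal (a i) • Measure.dirac (x i)) +
    ENNReal.ofReal (1 - ∑' i, a i) • μ

variable {a : ι → ℝ} {x : ι → Ω} {μ : Measure Ω}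

theorem isProbabilityMeasure_atomicMixture [IsProbabilityMeasure μ] (ha : ∀ i, 0 ≤ a i)
    (hsum : Summable a) (hle : ∑' i, a i ≤ 1) : IsProbabilityMeasure (atomicMixture a x μ) := by
  constructor
  simp only [atomicMixture, Measure.add_apply, Measure.smul_apply, smul_eq_mul,
    Measure.sum_apply _ MeasurableSet.univ, measure_univ, mul_one]
  rw [← ENNReal.ofReal_tsum_of_nonneg ha hsum,
    ← ENNReal.ofReal_add (tsum_nonneg ha) (sub_nonneg.2 hle), add_sub_cancel, ENNReal.ofReal_one]

theorem isOpenPosMeasure_atomicMixture [TopologicalSpace Ω] [μ.IsOpenPosMeasure]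
    (hlt : ∑' i, a i < 1) : (atomicMixture a x μ).IsOpenPosMeasure := by
  have hpos : ENNReal.ofReal (1 - ∑' i, a i) ≠ 0 := by simpa using hlt
  have := Measure.isOpenPosMeasure_smul μ hpos
  exact (Measure.le_add_left le_rfl : _ ≤ atomicMixture a x μ).isOpenPosMeasure

theorem atomicMixture_singleton_eq_zero_iff [MeasurableSingletonClass Ω] [NullSingletonClass μ]
    (ha : ∀ i, 0 < a i) (y : Ω) : atomicMixture a x μ {y} = 0 ↔ y ∉ range x := by
  have hai (i : ι) : ¬a i ≤ 0 := (ha i).not_ge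
  simp [atomicMixture, hai]

end AtomicMixture

/-! ### The Denjoy homeomorphism -/

instance isProbabilityMeasure_volume_T1 : IsProbabilityMeasure (volume : Measure T1) :=
  ⟨by rw [AddCircle.measure_univ, ENNReal.ofReal_one]⟩

instance nullSingletonClass_volume_addCircle {T : ℝ} [Fact (0 < T)] :
    NullSingletonClass (volume : Measure (AddCircle T)) :=
  ⟨fun z => by simpa [(Fact.out : 0 < T).le] using AddCircle.volume_closedBall T (x := z) 0⟩

theorem stmt11_general (ρ : ℝ) (hρ : Irrational ρ)
    (x₀ : T1) (x : ℤ → T1) (hx : ∀ n : ℤ, x n = x₀ + n • (ρ : T1))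
    (ν : Measure T1) [IsProbabilityMeasure ν] [ν.IsOpenPosMeasure]
    (hatom : ∀ y, ν {y} = 0 ↔ y ∉ range x)
    (h : T1 → T1) (hh : IsQuantileMap ν h)
    (c d : ℤ → T1)
    (hcd : ∀ n : ℤ, h ⁻¹' {x n} = {z | lift1 (c n) ≤ lift1 z ∧ lift1 z ≤ lift1 (d n)})
    (A : Set T1)
    (hA : A = Set.univ \ ⋃ n : ℤ, {z | lift1 (c n) ≤ lift1 z ∧ lift1 z < lift1 (d n)}) :
    ∃ f : T1 ≃ₜ T1,
      (∀ z ∈ A, f z ∈ A) ∧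
      (∀ u v w : T1, sbtw u v w → sbtw (f u) (f v) (f w)) ∧
      (∀ n : ℤ, f '' {z | lift1 (c n) ≤ lift1 z ∧ lift1 z ≤ lift1 (d n)} =
        {z | lift1 (c (n + 1)) ≤ lift1 z ∧ lift1 z ≤ lift1 (d (n + 1))}) ∧
      (∀ n m k : ℤ, m ≠ k →
        Disjoint (zIter f.toEquiv m '' {z | lift1 (c n) < lift1 z ∧ lift1 z < lift1 (d n)})
          (zIter f.toEquiv k '' {z | lift1 (c n) < lift1 z ∧ lift1 z < lift1 (d n)})) ∧
      (∀ z : T1, h (f z) = h z + (ρ : T1)) ∧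
      (∃ F : CircleDeg1Lift, (∀ t : ℝ, ((F t : ℝ) : T1) = f ((t : ℝ) : T1)) ∧
        Irrational F.translationNumber) := by
  have hsucc (n : ℤ) : x (n + 1) = x n + (ρ : T1) := by
    rw [hx, hx, add_zsmul, one_zsmul, add_assoc]
  obtain ⟨F, hsemi, hmax, hrot⟩ := hh.exists_denjoyLift (ρ := ρ) fun y => by
    rw [hatom, hatom, mem_range_add_iff_of_succ hsucc]
  refine ⟨inducedCircleHomeo F, ?_, fun u v w => (sbtw_inducedCircleHomeo_iff F u v w).2,
    fun n => ?_, fun n m k => ?_, hsemi, F, fun t => rfl, by rwa [hrot]⟩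
  · subst hA
    intro z
    rw [hh.mem_diff_iUnion_iff hcd, hh.mem_diff_iUnion_iff hcd, hsemi,
      mem_range_add_iff_of_succ hsucc]
    exact fun hz hmem => (congrArg _ (hz hmem)).trans (hmax (h z))
  · rw [← hcd, ← hcd, hsucc]
    exact image_fiber_of_semiconj_add (f := (inducedCircleHomeo F).toEquiv) hsemi (x n)
  · refine disjoint_zIter_image_of_semiconj_add hsemi (injective_zsmul_coe_of_irrational hρ)
      (y := x n) ?_
    rw [hcd]
    exact fun z hz => ⟨hz.1.le, hz.2.le⟩

/-- the map `f̃` of the Denjoy construction extends to an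
orientation-preserving circle homeomorphism `f` with `f(Iₙ) = I_{n+1}`, wandering
open intervals `int Iₙ`, semiconjugate to `R` via `h`; in particular `f` is of Denjoy
type (irrational rotation number and a wandering open interval). -/
theorem stmt11 (ρ : ℝ) (hρ : Irrational ρ)
    (x₀ : T1) (x : ℤ → T1) (hx : ∀ n : ℤ, x n = x₀ + n • (ρ : T1))
    (h0 : (0 : T1) ∉ Set.range x)
    (a : ℤ → ℝ) (ha : ∀ n, 0 < a n) (hsum : Summable a) (hlt : (∑' n : ℤ, a n) < 1)
    (ν : Measure T1)
    (hν : ν = Measure.sum (fun n : ℤ => ENNReal.ofReal (a n) • Measure.dirac (x n)) +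
      ENNReal.ofReal (1 - ∑' n : ℤ, a n) • volume)
    (h : T1 → T1)
    (hmin : ∀ z, ENNReal.ofReal (lift1 z) ≤ ν {w | lift1 w ≤ lift1 (h z)} ∧
      ∀ y, ENNReal.ofReal (lift1 z) ≤ ν {w | lift1 w ≤ lift1 y} → lift1 (h z) ≤ lift1 y)
    (c d : ℤ → T1)
    (hcd : ∀ n : ℤ, h ⁻¹' {x n} = {z | lift1 (c n) ≤ lift1 z ∧ lift1 z ≤ lift1 (d n)})
    (A : Set T1)
    (hA : A = Set.univ \ ⋃ n : ℤ, {z | lift1 (c n) ≤ lift1 z ∧ lift1 z < lift1 (d n)})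
    (hbij : Set.BijOn h A Set.univ) :
    ∃ f : T1 ≃ₜ T1,
      (∀ z ∈ A, f z ∈ A) ∧
      (∀ u v w : T1, sbtw u v w → sbtw (f u) (f v) (f w)) ∧
      (∀ n : ℤ, f '' {z | lift1 (c n) ≤ lift1 z ∧ lift1 z ≤ lift1 (d n)} =
        {z | lift1 (c (n + 1)) ≤ lift1 z ∧ lift1 z ≤ lift1 (d (n + 1))}) ∧
      (∀ n m k : ℤ, m ≠ k →
        Disjoint (zIter f.toEquiv m '' {z | lift1 (c n) < lift1 z ∧ lift1 z < lift1 (d n)})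
          (zIter f.toEquiv k '' {z | lift1 (c n) < lift1 z ∧ lift1 z < lift1 (d n)})) ∧
      (∀ z : T1, h (f z) = h z + (ρ : T1)) ∧
      (∃ F : CircleDeg1Lift, (∀ t : ℝ, ((F t : ℝ) : T1) = f ((t : ℝ) : T1)) ∧
        Irrational F.translationNumber) := by
  obtain rfl : ν = atomicMixture a x volume := hν
  have := isProbabilityMeasure_atomicMixture (x := x) (μ := volume) (fun n => (ha n).le) hsum hlt.le
  have := isOpenPosMeasure_atomicMixture (x := x) (μ := volume) hlt
  exact stmt11_general ρ hρ x₀ x hx _ (atomicMixture_singleton_eq_zero_iff ha) h hmin c d hcd A hA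

end
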